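/- arXiv:1704.03083 — 6 statements merged into one kernel-verified Lean document; each statement's English description precedes it below -/
import Mathlib

section
/- For every finite group G, S(G) ≥ |G|, i.e., the sum over all subgroups H of G of the number of elements of H whose order equals the exponent of H is at least the order of G. -/
/-- `phiG G` is the number of elements of `G` whose order equals the exponent of `G`. -/
noncomputable def phiG (G : Type*) [Group G] : ℕ :=
  Nat.card {a : G // orderOf a = Monoid.exponent G}

/-- `SG G` is the sum of `phiG H` over all subgroups `H` of `G`. -/
noncomputable def SG (G : Type*) [Group G] : ℕ :=
  ∑ᶠ H : Subgroup G, phiG H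

theorem S_ge_card (G : Type*) [Group G] [Fintype G] : SG G ≥ Nat.card G := by
  classical
  have h1 : SG G = Nat.card (Σ H : Subgroup G, {a : H // orderOf a = Monoid.exponent H}) := by
    rw [Nat.card_sigma, SG, finsum_eq_sum_of_fintype]
    rfl
  rw [h1, ge_iff_le]
  refine Nat.card_le_card_of_injective
    (fun g : G => ⟨Subgroup.zpowers g, ⟨⟨g, Subgroup.mem_zpowers g⟩, ?_⟩⟩) ?_
  · rw [IsCyclic.exponent_eq_card, Nat.card_zpowers, Subgroup.orderOf_mk]
  · intro a b hab
    exact congrArg (fun x : (Σ H : Subgroup G, {a : H // orderOf a = Monoid.exponent H}) =>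
      ((x.2.1 : x.1) : G)) hab
end

section
/- For a finite group G, S(G) = |G| if and only if G is a ZM-group, i.e., all Sylow subgroups of G are cyclic. -/
theorem aux_sg_card (G : Type*) [Group G] [Fintype G] :
    SG G = Nat.card (Σ H : Subgroup G, {a : H // orderOf a = Monoid.exponent H}) := by
  classical
  have : Fintype (Subgroup G) := Fintype.ofFinite _
  rw [Nat.card_sigma, SG, finsum_eq_sum_of_fintype]
  rfl

theorem aux_exp_zpowers {G : Type*} [Group G] [Finite G] (a : G) :
    orderOf (⟨a, Subgroup.mem_zpowers a⟩ : Subgroup.zpowers a) =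
      Monoid.exponent (Subgroup.zpowers a) := by
  rw [IsCyclic.exponent_eq_card, Nat.card_zpowers, Subgroup.orderOf_mk]

theorem S_eq_card_iff_ZM (G : Type*) [Group G] [Fintype G] :
    SG G = Nat.card G ↔ ∀ (p : ℕ), p.Prime → ∀ P : Sylow p G, IsCyclic P := by
  classical
  let g : (Σ H : Subgroup G, {a : H // orderOf a = Monoid.exponent H}) → G :=
    fun x => ((x.2 : x.1) : G)
  have hs : Function.Surjective g := fun a =>
    ⟨⟨Subgroup.zpowers a, ⟨⟨a, Subgroup.mem_zpowers a⟩, aux_exp_zpowers a⟩⟩, rfl⟩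
  rw [aux_sg_card]
  constructor
  · intro h p hp P
    have hb : Function.Bijective g := (Nat.bijective_iff_surjective_and_card g).2 ⟨hs, h⟩
    have : Fact p.Prime := ⟨hp⟩
    obtain ⟨a, ha⟩ := hp.exists_orderOf_eq_pow_factorization_exponent P
    have hexp : orderOf a = Monoid.exponent P := by
      obtain ⟨n, hn⟩ := IsPGroup.iff_card.1 P.2
      obtain ⟨k, -, hk⟩ := (Nat.dvd_prime_pow hp).1 (hn ▸ Group.exponent_dvd_nat_card (G := P))
      rw [ha, hk, hp.factorization_pow, Finsupp.single_eq_same]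
    have := @hb.1 ⟨P, ⟨a, hexp⟩⟩ ⟨Subgroup.zpowers (a : G),
      ⟨⟨a, Subgroup.mem_zpowers _⟩, aux_exp_zpowers _⟩⟩ rfl
    have h1 : (P : Subgroup G) = Subgroup.zpowers (a : G) := congrArg Sigma.fst this
    change IsCyclic (P : Subgroup G)
    rw [h1]
    infer_instance
  · intro h
    have : IsZGroup G := ⟨fun p hp P => h p hp P⟩
    refine Nat.card_congr (Equiv.ofBijective g ⟨?_, hs⟩)
    have key : ∀ x, x.1 = Subgroup.zpowers (g x) := by
      rintro ⟨H, a, ha⟩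
      symm
      apply Subgroup.eq_of_le_of_card_ge
      · rw [Subgroup.zpowers_le]; exact a.2
      · rw [Nat.card_zpowers]
        change Nat.card H ≤ orderOf (a : G)
        rw [Subgroup.orderOf_coe, ha, IsZGroup.exponent_eq_card]
    intro x y hxy
    have h1 := key x
    have h2 := key y
    rw [hxy, ← h2] at h1
    obtain ⟨H, a, ha⟩ := x
    obtain ⟨K, b, hb⟩ := y
    dsimp only at h1
    subst h1
    have : a = b := Subtype.ext hxy
    subst this
    rfl
end

section
/- If G is a finite group with S(G) = |G|, then every subgroup H of G satisfying φ(H) ≠ 0 is cyclic; equivalently, φ(H) = 0 for every non-cyclic subgroup H of G. -/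
theorem phi_ne_zero_imp_cyclic_of_S_eq_card (G : Type*) [Group G] [Fintype G]
    (h : SG G = Nat.card G) :
    ∀ H : Subgroup G, phiG H ≠ 0 → IsCyclic H := by
  classical
  intro H hH
  have hex : ∀ g : G, orderOf (⟨g, Subgroup.mem_zpowers g⟩ : Subgroup.zpowers g)
      = Monoid.exponent (Subgroup.zpowers g) := by
    intro g
    rw [IsCyclic.exponent_eq_card, Nat.card_zpowers, Subgroup.orderOf_mk]
  let T := Σ K : Subgroup G, {a : K // orderOf a = Monoid.exponent K}
  let f : G → T := fun g => ⟨Subgroup.zpowers g, ⟨⟨g, Subgroup.mem_zpowers g⟩, hex g⟩⟩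
  let p : T → G := fun t => (t.2.1 : G)
  have hf : Function.Injective f := by
    intro a b hab
    exact congrArg p hab
  have hcard : Nat.card T = Nat.card G := by
    rw [← h, Nat.card_sigma, SG, finsum_eq_sum_of_fintype]
    rfl
  have hbij : Function.Bijective f :=
    (Nat.bijective_iff_injective_and_card f).2 ⟨hf, hcard.symm⟩
  have hne : Nonempty {a : H // orderOf a = Monoid.exponent H} := by
    by_contra hcon
    rw [not_nonempty_iff] at hcon
    exact hH Nat.card_of_isEmpty
  obtain ⟨a⟩ := hne
  obtain ⟨g, hg⟩ := hbij.2 ⟨H, a⟩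
  have : Subgroup.zpowers g = H := congrArg Sigma.fst hg
  rw [← this]
  infer_instance
end

section
/- If G is a finite group with S(G) = |G|, then every Sylow subgroup of G is cyclic. -/
lemma exists_orderOf_eq_exponent_of_pgroup {P : Type*} [Group P] [Finite P] {p : ℕ}
    (hp : p.Prime) (hP : IsPGroup p P) : ∃ a : P, orderOf a = Monoid.exponent P := by
  haveI := Fact.mk hp
  obtain ⟨a, ha⟩ := hp.exists_orderOf_eq_pow_factorization_exponent P
  refine ⟨a, ha.trans ?_⟩
  obtain ⟨n, hn⟩ := IsPGroup.iff_card.mp hP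
  have h1 : Monoid.exponent P ∣ p ^ n := hn ▸ Group.exponent_dvd_nat_card
  obtain ⟨k, -, hk⟩ := (Nat.dvd_prime_pow hp).mp h1
  rw [hk, hp.factorization_pow]
  simp

theorem sylow_cyclic_of_S_eq_card (G : Type*) [Group G] [Fintype G]
    (h : SG G = Nat.card G) :
    ∀ (p : ℕ), p.Prime → ∀ P : Sylow p G, IsCyclic P := by
  intro p hp P
  by_contra hc
  obtain ⟨a, ha⟩ := exists_orderOf_eq_exponent_of_pgroup hp P.isPGroup'
  have hS : SG G = Nat.card (Σ H : Subgroup G, {a : H // orderOf a = Monoid.exponent H}) := by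
    classical
    haveI := Fintype.ofFinite (Subgroup G)
    rw [Nat.card_sigma, SG, finsum_eq_sum_of_fintype]
    rfl
  have hz : ∀ g : G, orderOf (⟨g, Subgroup.mem_zpowers g⟩ : Subgroup.zpowers g)
      = Monoid.exponent (Subgroup.zpowers g) := by
    intro g
    rw [IsCyclic.exponent_eq_card, Nat.card_zpowers, Subgroup.orderOf_mk]
  let f : Option G → Σ H : Subgroup G, {a : H // orderOf a = Monoid.exponent H} := fun o =>
    match o with
    | none => ⟨(P : Subgroup G), ⟨a, ha⟩⟩
    | some g => ⟨Subgroup.zpowers g, ⟨⟨g, Subgroup.mem_zpowers g⟩, hz g⟩⟩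
  have hne : ∀ g : G, (P : Subgroup G) ≠ Subgroup.zpowers g := by
    intro g hg
    apply hc
    change IsCyclic (P : Subgroup G)
    rw [hg]
    infer_instance
  have hf : Function.Injective f := by
    intro x y hxy
    cases x with
    | none => cases y with
      | none => rfl
      | some g => exact absurd (congrArg Sigma.fst hxy) (hne g)
    | some g' => cases y with
      | none => exact absurd (congrArg Sigma.fst hxy).symm (hne g')
      | some g =>
        have : g' = g := congrArg (fun s : (Σ H : Subgroup G,
          {a : H // orderOf a = Monoid.exponent H}) => ((s.2.1 : s.1) : G)) hxy
        rw [this]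
  have := Nat.card_le_card_of_injective f hf
  rw [← hS, h, Finite.card_option] at this
  omega
end

section
/- If G is a finite group all of whose Sylow subgroups are cyclic, then S(G) = |G|. -/
theorem S_eq_card_of_sylow_cyclic (G : Type*) [Group G] [Fintype G]
    (h : ∀ (p : ℕ), p.Prime → ∀ P : Sylow p G, IsCyclic P) :
    SG G = Nat.card G := by
  classical
  have hZ : IsZGroup G := ⟨h⟩
  have key : ∀ (H : Subgroup G) (a : H),
      orderOf a = Monoid.exponent H ↔ Subgroup.zpowers (a : G) = H := by
    intro H a
    rw [IsZGroup.exponent_eq_card, ← Subgroup.orderOf_coe, ← Nat.card_zpowers]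
    constructor
    · intro e
      exact Subgroup.eq_of_le_of_card_ge (Subgroup.zpowers_le.2 a.2) e.ge
    · intro e
      rw [e]
  unfold SG phiG
  have : Fintype (Subgroup G) := Fintype.ofFinite _
  rw [finsum_eq_sum_of_fintype, ← Nat.card_sigma]
  refine Nat.card_congr (Equiv.ofBijective (fun x => (x.2.1 : G)) ⟨?_, ?_⟩)
  · rintro ⟨H, a, ha⟩ ⟨K, b, hb⟩ hab
    have h1 := (key H a).1 ha
    have h2 := (key K b).1 hb
    have hab' : (a : G) = b := hab
    have hHK : H = K := by rw [← h1, ← h2, hab']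
    subst hHK
    have : a = b := Subtype.ext hab'
    subst this
    rfl
  · intro g
    exact ⟨⟨Subgroup.zpowers g, ⟨g, Subgroup.mem_zpowers g⟩, (key _ _).2 rfl⟩, rfl⟩
end

section
/- If G is a finite group with all Sylow subgroups cyclic (a ZM-group), then for every subgroup H of G, φ(H) ≠ 0 if and only if H is cyclic. -/
theorem phi_ne_zero_iff_cyclic_of_ZM (G : Type*) [Group G] [Fintype G]
    (h : ∀ (p : ℕ), p.Prime → ∀ P : Sylow p G, IsCyclic P) :
    ∀ H : Subgroup G, phiG H ≠ 0 ↔ IsCyclic H := by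
  intro H
  have : IsZGroup G := ⟨h⟩
  have e : Monoid.exponent H = Nat.card H := IsZGroup.exponent_eq_card _
  unfold phiG
  rw [Nat.card_ne_zero, e]
  constructor
  · rintro ⟨⟨a, ha⟩, -⟩
    exact isCyclic_of_orderOf_eq_card a ha
  · intro hc
    obtain ⟨g, hg⟩ := IsCyclic.exists_generator (α := H)
    exact ⟨⟨⟨g, orderOf_eq_card_of_forall_mem_zpowers hg⟩⟩, inferInstance⟩
end
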